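/- Tangency in the self-dual case: (i) Γ_k(t) = Γ_k^{(0)} + O(t) (i.e., Γ_k(t) has no pole) for every k ∈ ℤ∖{n}, and Γ_n(t) = (Γ_{n+1}^{(0)} − Γ_{n−1}^{(0)})/(4t) + Γ_n^{(0)} + O(t). (ii) If moreover Γ_k^{(0)} = 0 for all k ∈ ℤ, then Γ_k(t) = 0 as a formal Laurent series in t, for all k ∈ ℤ. -/

import Mathlib

/-!
Common definitions: the matrices `L₁`, `L₂` of the Toeplitz lattice, their powers,
the recursion polynomials `Γ_k` (here `GamA`), `Γ̃_k` (here `GamB`) and their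
self-dual version (`GamSD`), together with the notion of formal Laurent
solutions of the (self-dual) Toeplitz lattice.
-/

noncomputable section

namespace SingConf

variable {A : Type*} [CommRing A]

/-- The entry `(L₁)_{ij} = -x_i y_{j-1} + δ_{i+1,j}` (for `j - i ≤ 1`, zero otherwise). -/
def L1e (x y : ℤ → A) (i j : ℤ) : A :=
  if j ≤ i + 1 then -(x i * y (j - 1)) + (if i + 1 = j then 1 else 0) else 0

/-- The entry `(L₂)_{ij} = -y_j x_{i-1} + δ_{j+1,i}` (for `j - i ≥ -1`, zero otherwise). -/
def L2e (x y : ℤ → A) (i j : ℤ) : A :=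
  if i ≤ j + 1 then -(y j * x (i - 1)) + (if j + 1 = i then 1 else 0) else 0

/-- The entry `(L₁^s)_{ij}`; the matrix `L₁` has upper bandwidth 1, so each entry of a
power is a finite sum. -/
def L1pow (x y : ℤ → A) : ℕ → ℤ → ℤ → A
  | 0 => fun i j => if i = j then 1 else 0
  | s + 1 => fun i j => ∑ l ∈ Finset.Icc (j - 1) (i + (s : ℤ)), L1pow x y s i l * L1e x y l j

/-- The entry `(L₂^s)_{ij}`. -/
def L2pow (x y : ℤ → A) : ℕ → ℤ → ℤ → A
  | 0 => fun i j => if i = j then 1 else 0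
  | s + 1 => fun i j => ∑ l ∈ Finset.Icc (i - (s : ℤ)) (j + 1), L2pow x y s i l * L2e x y l j

/-- The recursion polynomial
`Γ_k(x,y;u) = (v_k/y_k)(-(L₁P₁'(L₁))_{k+1,k+1} - (L₂P₂'(L₂))_{k,k}
              + (P₁'(L₁))_{k+1,k} + (P₂'(L₂))_{k,k+1}) + k x_k`
where `P₁(λ) = ∑_{i=1}^N u_i λ^i/i`, `P₂(λ) = ∑_{i=1}^N u_{-i} λ^i/i`, `v_k = 1 - x_k y_k`.
The apparent denominator `y_k` cancels, thanks to the identities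
`(L₁^{i-1})_{k+1,k} - (L₁^i)_{k+1,k+1} = y_k ∑_{l} x_l (L₁^{i-1})_{k+1,l}` and
`(L₂^{i-1})_{k,k+1} - (L₂^i)_{k,k} = y_k ∑_{l} x_{l-1} (L₂^{i-1})_{k,l}`,
which is how the cancellation-free expression below is obtained. -/
def GamA (N : ℕ) (u : ℤ → A) (x y : ℤ → A) (k : ℤ) : A :=
  (1 - x k * y k) *
    ((∑ i ∈ Finset.Icc 1 N, u (i : ℤ) *
        ∑ l ∈ Finset.Icc k (k + (i : ℤ)), x l * L1pow x y (i - 1) (k + 1) l) +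
      ∑ i ∈ Finset.Icc 1 N, u (-(i : ℤ)) *
        ∑ l ∈ Finset.Icc (k - (i : ℤ) + 1) (k + 1), x (l - 1) * L2pow x y (i - 1) k l) +
  (k : A) * x k

/-- The recursion polynomial
`Γ̃_k(x,y;u) = (v_k/x_k)(-(L₁P₁'(L₁))_{k,k} - (L₂P₂'(L₂))_{k+1,k+1}
              + (P₁'(L₁))_{k+1,k} + (P₂'(L₂))_{k,k+1}) + k y_k`,
written in cancellation-free form using
`(L₁^{i-1})_{k+1,k} - (L₁^i)_{k,k} = x_k ∑_{l} y_{l-1} (L₁^{i-1})_{l,k}` and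
`(L₂^{i-1})_{k,k+1} - (L₂^i)_{k+1,k+1} = x_k ∑_{l} y_l (L₂^{i-1})_{l,k+1}`. -/
def GamB (N : ℕ) (u : ℤ → A) (x y : ℤ → A) (k : ℤ) : A :=
  (1 - x k * y k) *
    ((∑ i ∈ Finset.Icc 1 N, u (i : ℤ) *
        ∑ l ∈ Finset.Icc (k - (i : ℤ) + 1) (k + 1), y (l - 1) * L1pow x y (i - 1) l k) +
      ∑ i ∈ Finset.Icc 1 N, u (-(i : ℤ)) *
        ∑ l ∈ Finset.Icc k (k + (i : ℤ)), y l * L2pow x y (i - 1) l (k + 1)) +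
  (k : A) * y k

/-- The self-dual recursion polynomial
`Γ_k(x;u) = (v_k/x_k)(2(P'(L))_{k+1,k} - (LP'(L))_{k+1,k+1} - (LP'(L))_{k,k}) + k x_k`
(where `L = L₁` with `y = x`, `v_k = 1 - x_k²`), in cancellation-free form. -/
def GamSD (N : ℕ) (u : ℕ → A) (x : ℤ → A) (k : ℤ) : A :=
  (1 - x k * x k) *
    (∑ i ∈ Finset.Icc 1 N, u i *
      ((∑ l ∈ Finset.Icc k (k + (i : ℤ)), x l * L1pow x x (i - 1) (k + 1) l) +
        ∑ l ∈ Finset.Icc (k - (i : ℤ) + 1) (k + 1), x (l - 1) * L1pow x x (i - 1) l k)) +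
  (k : A) * x k

variable {K : Type*} [Field K]

/-- `f(t) = O(t^m)` for a formal Laurent series. -/
def BigO (f : LaurentSeries K) (m : ℤ) : Prop := ∀ i < m, f.coeff i = 0

/-- A family `x(t) = (x_k(t))_{k ∈ ℤ}` of formal Laurent series is a solution of the first
vector field of the self-dual Toeplitz lattice: `dx_k/dt = (1 - x_k²)(x_{k+1} - x_{k-1})`;
stated coefficientwise (the coefficient of `t^m` in `dx_k/dt` is `(m+1)·x_k^{(m+1)}`). -/
def IsSolSD (x : ℤ → LaurentSeries K) : Prop :=
  ∀ k m : ℤ, ((m + 1 : ℤ) : K) * (x k).coeff (m + 1) =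
    ((1 - x k * x k) * (x (k + 1) - x (k - 1))).coeff m

/-- A family `(x_k(t), y_k(t))_{k ∈ ℤ}` of formal Laurent series is a solution of the first
Toeplitz vector field: `dx_k/dt = (1 - x_k y_k)(x_{k+1} - x_{k-1})`,
`dy_k/dt = (1 - x_k y_k)(y_{k+1} - y_{k-1})`. -/
def IsSolT (x y : ℤ → LaurentSeries K) : Prop :=
  ∀ k m : ℤ,
    ((m + 1 : ℤ) : K) * (x k).coeff (m + 1) =
      ((1 - x k * y k) * (x (k + 1) - x (k - 1))).coeff m ∧
    ((m + 1 : ℤ) : K) * (y k).coeff (m + 1) =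
      ((1 - x k * y k) * (y (k + 1) - y (k - 1))).coeff m

end SingConf

open SingConf

/-!
The weights `v_k = 1 - x_k²` turn the lattice into `x_k' = v_k (x_{k+1} - x_{k-1})`. The powers of
`L` evolve by a Lax equation `(L^s)' = [B, L^s]` with `B` tridiagonal, and this makes every
`Γ_k` a solution of the same linear equation, `Γ_k' = v_k (Γ_{k+1} - Γ_{k-1})`: the explicit `t` in
`u_1 + t` compensates for the explicit `k` in `k x_k`.

Everything else is read off the orders of the `v_k`. Far from `n` no `x_n` occurs in `Γ_k`, so `Γ_k`
is regular; since `v_k` is a unit for `|k - n| ≥ 2`, regularity spreads inwards up to `n ± 1`. As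
`v_n = -1/(4t²) + ⋯`, the equation at `n` gives the simple pole of `Γ_n`. Finally `v_{n ± 1} = O(t)`
beats the double pole of `v_n`: if all constant terms vanish and `Γ = O(t^m)`, then
`Γ_{n ± 1} = O(t^{m+2})`, hence `Γ_n = O(t^{m+1})`, and the order can be raised indefinitely.
-/

namespace SingConf

/-! ### Powers of the matrix `L₁` -/

section Powers

variable {A : Type*} [CommRing A] (x y : ℤ → A)

/-- The tail `∑_{l ≥ k} (L₁^s)_{il} x_l` of the pairing of row `i` of `L₁^s` with `x`; it is a
finite sum because the row vanishes beyond `l = i + s`. -/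
def rowTail (s : ℕ) (i k : ℤ) : A :=
  ∑ l ∈ Finset.Icc k (i + s), x l * L1pow x y s i l

/-- The head `∑_{l ≤ k + 1} y_{l-1} (L₁^s)_{lj}` of the pairing of the shifted sequence `y` with
column `j` of `L₁^s`; it is a finite sum because the column vanishes before `l = j - s`. The index
`k` is that of the last `y` that occurs. -/
def colHead (s : ℕ) (k j : ℤ) : A :=
  ∑ l ∈ Finset.Icc (j - s) (k + 1), y (l - 1) * L1pow x y s l j

variable {x y} {s : ℕ} {i j k : ℤ}

theorem L1e_of_le (h : j ≤ i + 1) :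
    L1e x y i j = (if i + 1 = j then 1 else 0) - x i * y (j - 1) := by
  rw [L1e, if_pos h]
  ring

theorem L1pow_zero : L1pow x y 0 i j = if i = j then 1 else 0 :=
  rfl

theorem L1pow_succ : L1pow x y (s + 1) i j =
    ∑ l ∈ Finset.Icc (j - 1) (i + s), L1pow x y s i l * L1e x y l j :=
  rfl

theorem L1pow_of_lt (h : i + s < j) : L1pow x y s i j = 0 := by
  cases s with
  | zero => exact if_neg (by omega)
  | succ s => rw [L1pow_succ, Finset.Icc_eq_empty (by omega), Finset.sum_empty]

theorem rowTail_of_lt (h : i + s < k) : rowTail x y s i k = 0 := by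
  rw [rowTail, Finset.Icc_eq_empty (by omega), Finset.sum_empty]

theorem colHead_of_lt (h : k + 1 < j - s) : colHead x y s k j = 0 := by
  rw [colHead, Finset.Icc_eq_empty (by omega), Finset.sum_empty]

variable (x y s i j k)

theorem rowTail_eq_add : rowTail x y s i k = x k * L1pow x y s i k + rowTail x y s i (k + 1) := by
  by_cases h : k ≤ i + s
  · rw [rowTail, ← Finset.insert_Icc_add_one_left_eq_Icc h, Finset.sum_insert (by simp), rowTail]
  · rw [rowTail_of_lt (by omega), rowTail_of_lt (by omega), L1pow_of_lt (by omega)]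
    simp

theorem colHead_eq_add :
    colHead x y s k j = y k * L1pow x y s (k + 1) j + colHead x y s (k - 1) j := by
  by_cases h : j - s ≤ k + 1
  · rw [colHead, ← Finset.insert_Icc_sub_one_right_eq_Icc h, Finset.sum_insert (by simp), colHead,
      add_sub_cancel_right, sub_add_cancel]
  · rw [colHead_of_lt (by omega), colHead_of_lt (by omega), L1pow_of_lt (by omega)]
    simp

theorem L1pow_succ_right :
    L1pow x y (s + 1) i (j + 1) = L1pow x y s i j - y j * rowTail x y s i j := by
  have entry : ∀ l ∈ Finset.Icc j (i + s), L1pow x y s i l * L1e x y l (j + 1) =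
      (if l = j then L1pow x y s i l else 0) - y j * (x l * L1pow x y s i l) := by
    intro l hl
    rw [L1e_of_le (by rw [Finset.mem_Icc] at hl; omega), add_sub_cancel_right]
    simp only [add_left_inj]
    split_ifs <;> ring
  rw [L1pow_succ, add_sub_cancel_right, Finset.sum_congr rfl entry, Finset.sum_sub_distrib,
    ← Finset.mul_sum, Finset.sum_ite_eq', rowTail, ite_eq_left_iff.2]
  intro h
  exact (L1pow_of_lt (by rw [Finset.mem_Icc] at h; omega)).symm

variable {i j} in
theorem L1pow_succ_eq_sum_L1e_mul {c : ℤ} (hc : c ≤ j - s) :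
    L1pow x y (s + 1) i j = ∑ m ∈ Finset.Icc c (i + 1), L1e x y i m * L1pow x y s m j := by
  induction s generalizing j with
  | zero =>
    simp only [L1pow_succ, L1pow_zero, ite_mul, one_mul, zero_mul, mul_ite, mul_one,
      mul_zero, Finset.sum_ite_eq, Finset.sum_ite_eq', Finset.mem_Icc]
    push_cast at hc ⊢
    split_ifs <;> first | rfl | omega
  | succ s ih =>
    have expand : ∀ l ∈ Finset.Icc (j - 1) (i + (s + 1 : ℕ)), L1pow x y (s + 1) i l * L1e x y l j =
        ∑ m ∈ Finset.Icc c (i + 1), L1e x y i m * (L1pow x y s m l * L1e x y l j) := by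
      intro l hl
      rw [ih (by rw [Finset.mem_Icc] at hl; omega), Finset.sum_mul]
      simp only [mul_assoc]
    rw [L1pow_succ, Finset.sum_congr rfl expand, Finset.sum_comm]
    refine Finset.sum_congr rfl fun m hm => ?_
    rw [← Finset.mul_sum, L1pow_succ]
    congr 1
    refine (Finset.sum_subset ?_ fun l hl hl' => ?_).symm
    · exact Finset.Icc_subset_Icc_right (by rw [Finset.mem_Icc] at hm; omega)
    · rw [Finset.mem_Icc] at hl hl'
      rw [L1pow_of_lt (by omega), zero_mul]

theorem L1pow_succ_left :
    L1pow x y (s + 1) i j = L1pow x y s (i + 1) j - x i * colHead x y s i j := by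
  have entry : ∀ l ∈ Finset.Icc (j - s) (i + 1), L1e x y i l * L1pow x y s l j =
      (if i + 1 = l then L1pow x y s l j else 0) - x i * (y (l - 1) * L1pow x y s l j) := by
    intro l hl
    rw [L1e_of_le (by rw [Finset.mem_Icc] at hl; omega)]
    split_ifs <;> ring
  rw [L1pow_succ_eq_sum_L1e_mul x y s le_rfl, Finset.sum_congr rfl entry, Finset.sum_sub_distrib,
    ← Finset.mul_sum, Finset.sum_ite_eq, colHead, ite_eq_left_iff.2]
  intro h
  exact (L1pow_of_lt (by rw [Finset.mem_Icc] at h; omega)).symm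

end Powers

theorem forall_of_forall_ge_of_pred {P : ℤ → Prop} (b : ℤ) (base : ∀ k, b ≤ k → P k)
    (step : ∀ k, P (k + 1) → P k) (k : ℤ) : P k := by
  rcases le_total b k with hk | hk
  · exact base k hk
  · induction k, hk using Int.leInductionDown with
    | base => exact base b le_rfl
    | pred k _ ih => exact step _ (by rwa [sub_add_cancel])

theorem forall_of_forall_le_of_succ {P : ℤ → Prop} (b : ℤ) (base : ∀ k, k ≤ b → P k)
    (step : ∀ k, P (k - 1) → P k) (k : ℤ) : P k := by
  rw [← neg_neg k]
  refine forall_of_forall_ge_of_pred (P := fun m => P (-m)) (-b) (fun m hm => base _ (by omega))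
    (fun m hm => step _ ?_) (-k)
  rwa [← neg_add']

/-! ### The Lax equation -/

section Lax

variable {A : Type*} [CommRing A]

/-- The derivations of a commutative ring, as `ℤ`-linear ones. The `ℤ`-algebra structure is fixed
here for a general ring because on `LaurentSeries K` instance search finds the one through power
series, which is not definitionally the canonical one. -/
abbrev RingDerivation (A : Type*) [CommRing A] : Type _ :=
  Derivation ℤ A A

/-- The ring derivation given by an additive map with the product rule. -/
def RingDerivation.mk (d : A →+ A) (leibniz : ∀ a b, d (a * b) = a * d b + b * d a) :
    RingDerivation A :=
  Derivation.mk' d.toIntLinearMap leibniz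

/-- The weight `v_k = 1 - x_k y_k` of the Toeplitz lattice. -/
def weight (x y : ℤ → A) (k : ℤ) : A :=
  1 - x k * y k

/-- The linear differential-difference equation `g_k' = v_k (g_{k+1} - g_{k-1})`, a discrete
advection equation with speeds `v`. With `v` the weights of `(x, y)`, the Toeplitz lattice says that
`x` and `y` are advected. -/
def IsAdvected (D : RingDerivation A) (v g : ℤ → A) : Prop :=
  ∀ k, D (g k) = v k * (g (k + 1) - g (k - 1))

/-- The entry `[B, M]_{ij}`, where `B` is the tridiagonal matrix of the Lax pair, with entries
`B_{i,i+1} = v_i`, `B_{ii} = x_{i-1} y_i` and `B_{i,i-1} = -1`. -/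
def laxCommutator (x y : ℤ → A) (M : ℤ → ℤ → A) (i j : ℤ) : A :=
  weight x y i * M (i + 1) j + x (i - 1) * y i * M i j - M (i - 1) j -
    (M i (j - 1) * weight x y (j - 1) + M i j * (x (j - 1) * y j) - M i (j + 1))

variable {D : RingDerivation A} {x y : ℤ → A}

theorem IsAdvected.comp_neg {v g : ℤ → A} (hg : IsAdvected D v g) :
    IsAdvected D (fun k => -v (-k)) (fun k => g (-k)) := fun k => by
  simp only [hg (-k), neg_add', neg_sub', sub_neg_eq_add]
  ring

theorem IsAdvected.map_rowTail (hx : IsAdvected D (weight x y) x) {s : ℕ}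
    (hlax : ∀ i j, D (L1pow x y s i j) = laxCommutator x y (L1pow x y s) i j) (i k : ℤ) :
    D (rowTail x y s i k) =
      weight x y i * rowTail x y s (i + 1) k + x (i - 1) * y i * rowTail x y s i k -
        rowTail x y s (i - 1) k - x k * weight x y (k - 1) * L1pow x y s i (k - 1) -
        x (k - 1) * L1pow x y s i k := by
  induction k using forall_of_forall_ge_of_pred (i + s + 2) with
  | base k hk =>
    rw [rowTail_of_lt (by omega), rowTail_of_lt (by omega), rowTail_of_lt (by omega),
      L1pow_of_lt (by omega), L1pow_of_lt (by omega), D.map_zero]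
    ring
  | step k ih =>
    rw [rowTail_eq_add x y s i k, rowTail_eq_add x y s (i + 1) k, rowTail_eq_add x y s (i - 1) k,
      D.map_add, ih, D.leibniz, hx, hlax, laxCommutator]
    simp only [add_sub_cancel_right, smul_eq_mul, weight]
    ring

theorem IsAdvected.map_colHead (hy : IsAdvected D (weight x y) y) {s : ℕ}
    (hlax : ∀ i j, D (L1pow x y s i j) = laxCommutator x y (L1pow x y s) i j) (k j : ℤ) :
    D (colHead x y s k j) =
      y k * weight x y (k + 1) * L1pow x y s (k + 2) j + y (k + 1) * L1pow x y s (k + 1) j -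
        (colHead x y s k (j - 1) * weight x y (j - 1) + colHead x y s k j * (x (j - 1) * y j) -
          colHead x y s k (j + 1)) := by
  induction k using forall_of_forall_le_of_succ (j - s - 3) with
  | base k hk =>
    rw [colHead_of_lt (by omega), colHead_of_lt (by omega), colHead_of_lt (by omega),
      L1pow_of_lt (by omega), L1pow_of_lt (by omega), D.map_zero]
    ring
  | step k ih =>
    rw [colHead_eq_add x y s j k, colHead_eq_add x y s (j - 1) k, colHead_eq_add x y s (j + 1) k,
      D.map_add, ih, D.leibniz, hy, hlax, laxCommutator, show k - 1 + 2 = k + 1 by ring,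
      show k + 1 + 1 = k + 2 by ring]
    simp only [add_sub_cancel_right, sub_add_cancel, smul_eq_mul, weight]
    ring

theorem laxCommutator_one (x y : ℤ → A) (i j : ℤ) :
    laxCommutator x y (fun i j => if i = j then 1 else 0) i j = 0 := by
  obtain h | rfl | rfl | rfl | h : i + 1 < j ∨ j = i + 1 ∨ j = i ∨ j = i - 1 ∨ j < i - 1 := by omega
  all_goals
    simp only [laxCommutator]
    split_ifs <;> first | omega | simp [weight]

theorem IsAdvected.map_L1pow (hx : IsAdvected D (weight x y) x)
    (hy : IsAdvected D (weight x y) y) (s : ℕ) (i j : ℤ) :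
    D (L1pow x y s i j) = laxCommutator x y (L1pow x y s) i j := by
  induction s generalizing i j with
  | zero =>
    refine Eq.trans ?_ (laxCommutator_one x y i j).symm
    rw [L1pow_zero, apply_ite D, D.map_one_eq_zero, D.map_zero, ite_self]
  | succ s ih =>
    obtain ⟨j, rfl⟩ : ∃ l, j = l + 1 := ⟨j - 1, by ring⟩
    have right_pred := L1pow_succ_right x y s i (j - 1)
    have tail_pred := rowTail_eq_add x y s i (j - 1)
    simp only [sub_add_cancel] at right_pred tail_pred
    simp only [laxCommutator, add_sub_cancel_right]
    rw [L1pow_succ_right, L1pow_succ_right, L1pow_succ_right, L1pow_succ_right, right_pred,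
      D.map_sub, D.leibniz, ih, hy, hx.map_rowTail ih, laxCommutator, tail_pred,
      rowTail_eq_add x y s i j]
    simp only [smul_eq_mul, weight]
    ring

end Lax

/-! ### The self-dual recursion polynomials are advected -/

section Advection

variable {A : Type*} [CommRing A] {D : RingDerivation A} {x : ℤ → A}

/-- The contribution of the monomial `λ^{s+1}/(s+1)` of `P` to the self-dual `Γ_k`. -/
def gamMonomial (x : ℤ → A) (s : ℕ) (k : ℤ) : A :=
  weight x x k * (rowTail x x s (k + 1) k + colHead x x s k k)

theorem GamSD_eq_sum_gamMonomial (N : ℕ) (u : ℕ → A) (x : ℤ → A) (k : ℤ) :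
    GamSD N u x k = ∑ i ∈ Finset.Icc 1 N, u i * gamMonomial x (i - 1) k + k * x k := by
  rw [GamSD, Finset.mul_sum]
  congr 1
  refine Finset.sum_congr rfl fun i hi => ?_
  rw [Finset.mem_Icc] at hi
  rw [gamMonomial, weight, rowTail, colHead, show k + 1 + ((i - 1 : ℕ) : ℤ) = k + i by omega,
    show k - ((i - 1 : ℕ) : ℤ) = k - i + 1 by omega]
  ring

theorem gamMonomial_zero (x : ℤ → A) (k : ℤ) :
    gamMonomial x 0 k = weight x x k * (x (k + 1) + x (k - 1)) := by
  simp [gamMonomial, rowTail, colHead, L1pow_zero]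

theorem L1pow_sub_rowTail_eq_L1pow_sub_colHead (x y : ℤ → A) (s : ℕ) (i j : ℤ) :
    L1pow x y s i j - y j * rowTail x y s i j =
      L1pow x y s (i + 1) (j + 1) - x i * colHead x y s i (j + 1) :=
  (L1pow_succ_right x y s i j).symm.trans (L1pow_succ_left x y s i (j + 1))

theorem isAdvected_gamMonomial (hx : IsAdvected D (weight x x) x) (s : ℕ) :
    IsAdvected D (weight x x) (gamMonomial x s) := by
  intro k
  have hlax := hx.map_L1pow hx s
  -- The relations needed come from comparing `L ^ s * L` with `L * L ^ s`.
  have right_left := L1pow_sub_rowTail_eq_L1pow_sub_colHead x x s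
  have upper := right_left (k + 1) k
  have lower := right_left k (k - 1)
  have middle := right_left (k + 1) (k - 1)
  have tail₀ := rowTail_eq_add x x s k (k - 1)
  have tail₁ := rowTail_eq_add x x s (k + 1) (k - 1)
  have tail₂ := rowTail_eq_add x x s (k + 2) k
  have head₀ := colHead_eq_add x x s k (k + 1)
  have head₁ := colHead_eq_add x x s (k + 1) (k + 1)
  have head₂ := colHead_eq_add x x s (k - 1) k
  simp only [add_sub_cancel_right, sub_add_cancel, show k + 1 + 1 = k + 2 by ring]
    at upper lower middle tail₀ tail₁ tail₂ head₀ head₁ head₂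
  rw [head₁] at upper
  rw [tail₀] at lower
  rw [tail₁, head₀] at middle
  simp only [gamMonomial]
  rw [D.leibniz, D.map_add, hx.map_rowTail hlax, hx.map_colHead hlax, weight, D.map_sub,
    D.map_one_eq_zero, D.leibniz, hx]
  simp only [add_sub_cancel_right, sub_add_cancel, show k + 1 + 1 = k + 2 by ring, smul_eq_mul,
    tail₀, tail₂, head₁, head₂, weight]
  linear_combination (1 - x k * x k) *
    (x (k + 1) * upper + x (k - 1) * lower - 2 * x k * middle)

theorem isAdvected_gamSD (hx : IsAdvected D (weight x x) x) {N : ℕ} (hN : 1 ≤ N) {u : ℕ → A}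
    (hu : ∀ i, D (u i) = if i = 1 then 1 else 0) :
    IsAdvected D (weight x x) (GamSD N u x) := by
  intro k
  have drift : ∑ i ∈ Finset.Icc 1 N, gamMonomial x (i - 1) k * D (u i) =
      weight x x k * (x (k + 1) + x (k - 1)) := by
    simp only [hu, mul_ite, mul_one, mul_zero, Finset.sum_ite_eq', Finset.mem_Icc, le_refl, hN,
      and_self, if_true, Nat.sub_self, gamMonomial_zero]
  have transport : ∑ i ∈ Finset.Icc 1 N, u i * D (gamMonomial x (i - 1) k) =
      weight x x k * (∑ i ∈ Finset.Icc 1 N, u i * gamMonomial x (i - 1) (k + 1) -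
        ∑ i ∈ Finset.Icc 1 N, u i * gamMonomial x (i - 1) (k - 1)) := by
    rw [← Finset.sum_sub_distrib, Finset.mul_sum]
    refine Finset.sum_congr rfl fun i _ => ?_
    rw [isAdvected_gamMonomial hx (i - 1) k]
    ring
  simp only [GamSD_eq_sum_gamMonomial, D.map_add, map_sum, D.leibniz, smul_eq_mul,
    Finset.sum_add_distrib, drift, transport, D.map_intCast, hx k]
  push_cast
  ring

end Advection

section Membership

variable {A : Type*} [CommRing A] (S : Subring A)

theorem L1pow_mem {x y : ℤ → A} {a b : ℤ} (hx : ∀ m, a ≤ m → m ≤ b → x m ∈ S)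
    (hy : ∀ m, a ≤ m → m ≤ b → y m ∈ S) {s : ℕ} {i j : ℤ} (hj : a ≤ j - s) (hi : i + s ≤ b) :
    L1pow x y s i j ∈ S := by
  induction s generalizing j with
  | zero =>
    rw [L1pow_zero]
    split_ifs
    exacts [S.one_mem, S.zero_mem]
  | succ s ih =>
    push_cast at hi hj
    refine S.sum_mem fun l hl => ?_
    rw [Finset.mem_Icc] at hl
    refine S.mul_mem (ih (by omega) (by omega)) ?_
    rw [L1e_of_le (by omega)]
    refine S.sub_mem ?_ (S.mul_mem (hx _ (by omega) (by omega)) (hy _ (by omega) (by omega)))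
    split_ifs
    exacts [S.one_mem, S.zero_mem]

theorem GamSD_mem {N : ℕ} {u : ℕ → A} {x : ℤ → A} {k : ℤ} (hu : ∀ i, u i ∈ S)
    (hx : ∀ m, k - N ≤ m → m ≤ k + N → x m ∈ S) : GamSD N u x k ∈ S := by
  have hk : x k ∈ S := hx k (by omega) (by omega)
  refine S.add_mem (S.mul_mem (S.sub_mem S.one_mem (S.mul_mem hk hk))
    (S.sum_mem fun i hi => S.mul_mem (hu i) (S.add_mem (S.sum_mem fun l hl => ?_)
      (S.sum_mem fun l hl => ?_)))) (S.mul_mem (intCast_mem S k) hk)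
  all_goals
    rw [Finset.mem_Icc] at hi hl
    exact S.mul_mem (hx _ (by omega) (by omega)) (L1pow_mem S hx hx (by omega) (by omega))

end Membership

/-! ### Orders of Laurent series -/

section Laurent

variable {K : Type*} [Field K]

theorem bigO_iff_le_orderTop {f : LaurentSeries K} {m : ℤ} : BigO f m ↔ m ≤ f.orderTop := by
  simp only [BigO, HahnSeries.le_orderTop_iff_forall, WithTop.coe_lt_coe]

theorem BigO.mono {f : LaurentSeries K} {a b : ℤ} (hf : BigO f b) (hab : a ≤ b) : BigO f a :=
  fun i hi => hf i (by omega)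

theorem bigO_single (a : ℤ) (c : K) : BigO (HahnSeries.single a c) a :=
  bigO_iff_le_orderTop.2 HahnSeries.orderTop_single_le

theorem bigO_one : BigO (1 : LaurentSeries K) 0 :=
  bigO_single 0 1

theorem BigO.add {f g : LaurentSeries K} {a : ℤ} (hf : BigO f a) (hg : BigO g a) :
    BigO (f + g) a := fun i hi => by
  rw [HahnSeries.coeff_add, hf i hi, hg i hi, add_zero]

theorem BigO.neg {f : LaurentSeries K} {a : ℤ} (hf : BigO f a) : BigO (-f) a := fun i hi => by
  rw [HahnSeries.coeff_neg, hf i hi, neg_zero]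

theorem BigO.sub {f g : LaurentSeries K} {a : ℤ} (hf : BigO f a) (hg : BigO g a) :
    BigO (f - g) a :=
  sub_eq_add_neg f g ▸ hf.add hg.neg

theorem BigO.mul {f g : LaurentSeries K} {a b : ℤ} (hf : BigO f a) (hg : BigO g b) :
    BigO (f * g) (a + b) := by
  rw [bigO_iff_le_orderTop] at *
  rw [HahnSeries.orderTop_mul, WithTop.coe_add]
  exact add_le_add hf hg

theorem BigO.of_mul {f g : LaurentSeries K} {a b : ℤ} (hf : f.coeff a ≠ 0)
    (hfg : BigO (f * g) (a + b)) : BigO g b := by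
  rw [bigO_iff_le_orderTop, HahnSeries.orderTop_mul, WithTop.coe_add] at hfg
  rw [bigO_iff_le_orderTop]
  refine (WithTop.add_le_add_iff_left (WithTop.coe_ne_top (a := a))).1 (hfg.trans ?_)
  gcongr
  exact HahnSeries.orderTop_le_of_coeff_ne_zero hf

theorem BigO.add_one {f : LaurentSeries K} {a : ℤ} (hf : BigO f a) (ha : f.coeff a = 0) :
    BigO f (a + 1) := fun i hi => by
  rcases (Int.lt_add_one_iff.1 hi).lt_or_eq with h | rfl
  exacts [hf i h, ha]

theorem BigO.coeff_mul {f g : LaurentSeries K} {a b : ℤ} (hf : BigO f a) (hg : BigO g b) :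
    (f * g).coeff (a + b) = f.coeff a * g.coeff b := by
  have remainder : BigO (f - HahnSeries.single a (f.coeff a)) (a + 1) :=
    (hf.sub (bigO_single a _)).add_one (by simp)
  have := remainder.mul hg (a + b) (by omega)
  rw [sub_mul, HahnSeries.coeff_sub, HahnSeries.coeff_single_mul, add_sub_cancel_left] at this
  exact sub_eq_zero.1 this

theorem eq_zero_of_forall_bigO {f : LaurentSeries K} (hf : ∀ m : ℕ, BigO f m) : f = 0 := by
  ext i
  exact hf (i + 1).toNat i (by omega)

variable (K) in
/-- The ring of Laurent series without pole. -/
def regularSubring : Subring (LaurentSeries K) where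
  carrier := {f | BigO f 0}
  mul_mem' := BigO.mul
  one_mem' := bigO_one
  add_mem' := BigO.add
  zero_mem' := fun _ _ => rfl
  neg_mem' := BigO.neg

/-! ### The derivation `d/dt` -/

theorem coeff_derivative (f : LaurentSeries K) (m : ℤ) :
    (LaurentSeries.derivative K f).coeff m = ((m + 1 : ℤ) : K) * f.coeff (m + 1) := by
  simp

theorem coeff_single_mul_derivative (f : LaurentSeries K) (m : ℤ) :
    (HahnSeries.single (1 : ℤ) (1 : K) * LaurentSeries.derivative K f).coeff m =
      (m : K) * f.coeff m := by
  rw [HahnSeries.coeff_single_mul, coeff_derivative, one_mul, sub_add_cancel]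

theorem support_single_mul_derivative_subset (f : LaurentSeries K) :
    (HahnSeries.single (1 : ℤ) (1 : K) * LaurentSeries.derivative K f).support ⊆ f.support := by
  intro m hm
  rw [HahnSeries.mem_support, coeff_single_mul_derivative] at hm
  exact right_ne_zero_of_mul hm

/-- The Euler operator `t d/dt` preserves exponents, so its product rule holds termwise in
each coefficient of a product; dividing by `t` gives the one for `d/dt`. -/
theorem derivative_mul (f g : LaurentSeries K) :
    LaurentSeries.derivative K (f * g) =
      f * LaurentSeries.derivative K g + g * LaurentSeries.derivative K f := by
  set t : LaurentSeries K := HahnSeries.single 1 1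
  have euler : t * LaurentSeries.derivative K (f * g) =
      f * (t * LaurentSeries.derivative K g) + t * LaurentSeries.derivative K f * g := by
    ext m
    rw [coeff_single_mul_derivative, HahnSeries.coeff_add, HahnSeries.coeff_mul,
      HahnSeries.coeff_mul_left' f.isPWO_support (support_single_mul_derivative_subset f),
      HahnSeries.coeff_mul_right' g.isPWO_support (support_single_mul_derivative_subset g),
      Finset.mul_sum, ← Finset.sum_add_distrib]
    refine Finset.sum_congr rfl fun ij hij => ?_
    rw [coeff_single_mul_derivative, coeff_single_mul_derivative,
      ← (Finset.mem_antidiagonal.1 hij).2.2]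
    push_cast
    ring
  refine mul_left_cancel₀ (HahnSeries.single_ne_zero one_ne_zero : t ≠ 0) (euler.trans ?_)
  ring

variable (K) in
/-- The derivation `d/dt` of the field of Laurent series. -/
def ddt : RingDerivation (LaurentSeries K) :=
  RingDerivation.mk (LaurentSeries.derivative K).toAddMonoidHom derivative_mul

theorem coeff_ddt (f : LaurentSeries K) (m : ℤ) :
    (ddt K f).coeff m = ((m + 1 : ℤ) : K) * f.coeff (m + 1) :=
  coeff_derivative f m

theorem ddt_single_one : ddt K (HahnSeries.single 1 1) = 1 := by
  ext m
  by_cases h : m = 0 <;> simp [coeff_ddt, HahnSeries.coeff_one, h]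

theorem ddt_C (c : K) : ddt K (HahnSeries.C c) = 0 := by
  ext m
  rw [coeff_ddt, HahnSeries.C_apply]
  rcases eq_or_ne (m + 1) 0 with h | h <;> simp [h]

theorem bigO_C_add_ite_single (c : K) (p : Prop) [Decidable p] :
    BigO (HahnSeries.C c + if p then HahnSeries.single (1 : ℤ) (1 : K) else 0) 0 := by
  refine (bigO_single 0 c).add ?_
  split_ifs
  exacts [(bigO_single 1 1).mono zero_le_one, fun _ _ => rfl]

theorem ddt_C_add_ite_single (c : K) (p : Prop) [Decidable p] :
    ddt K (HahnSeries.C c + if p then HahnSeries.single (1 : ℤ) (1 : K) else 0) =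
      if p then 1 else 0 := by
  rw [map_add, ddt_C, zero_add, apply_ite (ddt K), ddt_single_one, map_zero]

theorem BigO.map_ddt {f : LaurentSeries K} (hf : BigO f 0) : BigO (ddt K f) 0 := fun i hi => by
  rw [coeff_ddt]
  rcases (Int.add_one_le_iff.2 hi).lt_or_eq with h | h
  · rw [hf _ h, mul_zero]
  · rw [h, Int.cast_zero, zero_mul]

theorem BigO.of_ddt [CharZero K] {f : LaurentSeries K} {a : ℤ} (hf : BigO (ddt K f) a)
    (h0 : 0 ≤ a → f.coeff 0 = 0) : BigO f (a + 1) := fun i hi => by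
  rcases eq_or_ne i 0 with rfl | hi0
  · exact h0 (by omega)
  · have := hf (i - 1) (by omega)
    rw [coeff_ddt, sub_add_cancel] at this
    exact (mul_eq_zero.1 this).resolve_left (Int.cast_ne_zero.2 hi0)

theorem IsSolSD.isAdvected {x : ℤ → LaurentSeries K} (hx : IsSolSD x) :
    IsAdvected (ddt K) (weight x x) x := fun k => by
  ext m
  rw [coeff_ddt, hx k m, weight]

/-! ### Advected families of Laurent series -/

variable {v g : ℤ → LaurentSeries K} {n : ℤ}

theorem IsAdvected.bigO_zero_of_lt (hg : IsAdvected (ddt K) v g) {m : ℤ}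
    (hfar : ∀ k ≤ m, BigO (g k) 0) (hv : ∀ k < n - 1, (v k).coeff 0 ≠ 0) :
    ∀ k < n, BigO (g k) 0 := by
  have bounded : ∀ (j : ℕ), ∀ k < n, k ≤ m + j → BigO (g k) 0 := by
    intro j
    induction j with
    | zero => exact fun k _ hk => hfar k (by simpa using hk)
    | succ j ih =>
      intro k hkn hk
      push_cast at hk
      have jump : BigO (g k - g (k - 2)) 0 := by
        have := (ih (k - 1) (by omega) (by omega)).map_ddt
        rw [hg, sub_add_cancel, sub_sub, one_add_one_eq_two] at this
        exact BigO.of_mul (a := 0) (hv (k - 1) (by omega)) this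
      simpa using jump.add (ih (k - 2) (by omega) (by omega))
  exact fun k hk => bounded (k - m).toNat k hk (by omega)

theorem IsAdvected.bigO_zero_of_gt (hg : IsAdvected (ddt K) v g) {m : ℤ}
    (hfar : ∀ k ≥ m, BigO (g k) 0) (hv : ∀ k > n + 1, (v k).coeff 0 ≠ 0) :
    ∀ k > n, BigO (g k) 0 := by
  intro k hk
  rw [← neg_neg k]
  refine hg.comp_neg.bigO_zero_of_lt (n := -n) (m := -m) (fun j hj => hfar _ (by omega))
    (fun j hj => ?_) (-k) (by omega)
  rw [HahnSeries.coeff_neg]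
  exact neg_ne_zero.2 (hv _ (by omega))

theorem IsAdvected.bigO_zero_of_ne (hg : IsAdvected (ddt K) v g) {m : ℤ}
    (hfar : ∀ k, m ≤ |k - n| → BigO (g k) 0) (hv : ∀ k, 2 ≤ |k - n| → (v k).coeff 0 ≠ 0)
    (k : ℤ) (hk : k ≠ n) : BigO (g k) 0 := by
  rcases hk.lt_or_gt with hlt | hgt
  · exact hg.bigO_zero_of_lt (m := n - m) (fun j hj => hfar j (le_abs.2 (by omega)))
      (fun j hj => hv j (le_abs.2 (by omega))) k hlt
  · exact hg.bigO_zero_of_gt (m := n + m) (fun j hj => hfar j (le_abs.2 (by omega)))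
      (fun j hj => hv j (le_abs.2 (by omega))) k hgt

theorem IsAdvected.bigO_add_one [CharZero K] (hg : IsAdvected (ddt K) v g) {k a m : ℤ}
    (hv : BigO (v k) a) (hsucc : BigO (g (k + 1)) m) (hpred : BigO (g (k - 1)) m)
    (h0 : 0 ≤ a + m → (g k).coeff 0 = 0) : BigO (g k) (a + m + 1) :=
  BigO.of_ddt (hg k ▸ hv.mul (hsucc.sub hpred)) h0

theorem IsAdvected.neg_coeff_neg_one (hg : IsAdvected (ddt K) v g) (hv : BigO (v n) (-2))
    (hsucc : BigO (g (n + 1)) 0) (hpred : BigO (g (n - 1)) 0) :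
    -(g n).coeff (-1) = (v n).coeff (-2) * ((g (n + 1)).coeff 0 - (g (n - 1)).coeff 0) := by
  rw [← HahnSeries.coeff_sub, ← hv.coeff_mul (hsucc.sub hpred), ← hg, coeff_ddt]
  norm_num

theorem IsAdvected.eq_zero_of_coeff_zero [CharZero K] (hg : IsAdvected (ddt K) v g)
    (hv : ∀ k ≠ n, BigO (v k) 0) (hvn : BigO (v n) (-2)) (hvsucc : BigO (v (n + 1)) 1)
    (hvpred : BigO (v (n - 1)) 1) (hreg : ∀ k, BigO (g k) 0) (h0 : ∀ k, (g k).coeff 0 = 0)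
    (k : ℤ) : g k = 0 := by
  suffices ∀ (m : ℕ) (k : ℤ), BigO (g k) m from eq_zero_of_forall_bigO fun m => this m k
  intro m
  induction m with
  | zero => exact hreg
  | succ m ih =>
    intro k
    push_cast
    rcases eq_or_ne k n with rfl | hk
    · have hsucc : BigO (g (k + 1)) (1 + m + 1) :=
        hg.bigO_add_one hvsucc (ih _) (ih _) fun _ => h0 _
      have hpred : BigO (g (k - 1)) (1 + m + 1) :=
        hg.bigO_add_one hvpred (ih _) (ih _) fun _ => h0 _
      exact (hg.bigO_add_one hvn hsucc hpred fun _ => h0 k).mono (by omega)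
    · exact (hg.bigO_add_one (hv k hk) (ih _) (ih _) fun _ => h0 k).mono (by omega)

/-! ### Weights of a Laurent solution -/

variable {x : ℤ → LaurentSeries K} {k : ℤ}

theorem bigO_weight (hx : BigO (x k) 0) : BigO (weight x x k) 0 :=
  bigO_one.sub (hx.mul hx)

theorem coeff_zero_weight (hx : BigO (x k) 0) :
    (weight x x k).coeff 0 = 1 - (x k).coeff 0 ^ 2 := by
  have := hx.coeff_mul hx
  rw [add_zero] at this
  rw [weight, HahnSeries.coeff_sub, this, HahnSeries.coeff_one, if_pos rfl, sq]

theorem bigO_weight_of_simple_pole (hx : BigO (x k) (-1)) : BigO (weight x x k) (-2) :=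
  (bigO_one.mono (by omega)).sub (hx.mul hx)

theorem coeff_neg_two_weight (hx : BigO (x k) (-1)) :
    (weight x x k).coeff (-2) = -(x k).coeff (-1) ^ 2 := by
  have : (x k * x k).coeff (-2) = _ := hx.coeff_mul hx
  rw [weight, HahnSeries.coeff_sub, this, HahnSeries.coeff_one, if_neg (by omega)]
  ring

theorem bigO_weight_one (hx : BigO (x k) 0) (hx0 : (x k).coeff 0 ^ 2 = 1) :
    BigO (weight x x k) 1 :=
  (bigO_weight hx).add_one (by rw [coeff_zero_weight hx, hx0, sub_self])

end Laurent

end SingConf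

/-- tangency, self-dual case. Let `x(t)` be a formal Laurent solution of
the self-dual Toeplitz lattice over a field `F` of characteristic `0`, with only `x_n(t)`
having a (simple) pole, `x_n(t) = -ε/(2t) + O(1)`, `x_{n±1}(t) = ∓ε + O(t)` and
`x_k(t) = a_k + O(t)` with `a_k² ≠ 1` for `|k - n| ≥ 2`. Set `Γ_k(t) := Γ_k(x(t); u(t))`
with `u(t) = (u_1 + t, u_2, …, u_N)`. Then: (i) `Γ_k(t)` has no pole for `k ≠ n`, and
`Γ_n(t) = (Γ_{n+1}^{(0)} - Γ_{n-1}^{(0)})/(4t) + O(1)`; (ii) if `Γ_k^{(0)} = 0` for all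
`k`, then `Γ_k(t) = 0` identically, for all `k`. -/
theorem statement5 (F : Type*) [Field F] [CharZero F] (n : ℤ) (N : ℕ) (hN : 1 ≤ N)
    (u : ℕ → F) (huN : u N ≠ 0) (ε : F) (hε : ε ^ 2 = 1)
    (x : ℤ → LaurentSeries F) (hsol : IsSolSD x)
    (hnopole : ∀ k, k ≠ n → BigO (x k) 0)
    (hpole : BigO (x n) (-1)) (hlead : (x n).coeff (-1) = -ε / 2)
    (hxp : (x (n + 1)).coeff 0 = -ε) (hxm : (x (n - 1)).coeff 0 = ε)
    (ha : ∀ k, 2 ≤ |k - n| → ((x k).coeff 0) ^ 2 ≠ 1)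
    (ut : ℕ → LaurentSeries F)
    (hut : ∀ i, ut i = HahnSeries.C (u i) +
      (if i = 1 then HahnSeries.single (1 : ℤ) (1 : F) else 0))
    (G : ℤ → LaurentSeries F) (hG : ∀ k, G k = GamSD N ut x k) :
    -- (i) Γ_k(t) = Γ_k^{(0)} + O(t) for k ≠ n, and
    --     Γ_n(t) = (Γ_{n+1}^{(0)} - Γ_{n-1}^{(0)})/(4t) + Γ_n^{(0)} + O(t):
    ((∀ k, k ≠ n → BigO (G k) 0) ∧
      BigO (G n) (-1) ∧
      (G n).coeff (-1) = ((G (n + 1)).coeff 0 - (G (n - 1)).coeff 0) / 4) ∧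
    -- (ii) if all constant terms vanish then Γ_k(t) = 0 identically:
    ((∀ k, (G k).coeff 0 = 0) → ∀ k, G k = 0) := by
  obtain rfl : G = GamSD N ut x := funext hG
  have hut_reg : ∀ i, BigO (ut i) 0 := fun i => hut i ▸ bigO_C_add_ite_single _ _
  have hΓ : IsAdvected (ddt F) (weight x x) (GamSD N ut x) :=
    isAdvected_gamSD hsol.isAdvected hN fun i => hut i ▸ ddt_C_add_ite_single _ _
  have hfar : ∀ k : ℤ, N + 1 ≤ |k - n| → BigO (GamSD N ut x k) 0 := fun k hk =>
    GamSD_mem (regularSubring F) hut_reg fun m _ _ => hnopole m (by rw [le_abs] at hk; omega)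
  have hunit : ∀ k : ℤ, 2 ≤ |k - n| → (weight x x k).coeff 0 ≠ 0 := fun k hk => by
    rw [coeff_zero_weight (hnopole k (by rintro rfl; simp at hk))]
    exact sub_ne_zero.2 (ha k hk).symm
  have hreg : ∀ k, k ≠ n → BigO (GamSD N ut x k) 0 := hΓ.bigO_zero_of_ne hfar hunit
  have hvn := bigO_weight_of_simple_pole hpole
  have hsucc := hreg (n + 1) (by omega)
  have hpred := hreg (n - 1) (by omega)
  have hΓn : BigO (GamSD N ut x n) (-1) := hΓ.bigO_add_one hvn hsucc hpred (by norm_num)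
  have hres := hΓ.neg_coeff_neg_one hvn hsucc hpred
  rw [coeff_neg_two_weight hpole, hlead, neg_div, neg_sq, div_pow, hε] at hres
  refine ⟨⟨hreg, hΓn, by linear_combination -hres⟩, fun h0 => ?_⟩
  have hregn : BigO (GamSD N ut x n) 0 := hΓn.add_one (by simpa [h0] using hres)
  exact hΓ.eq_zero_of_coeff_zero (fun k hk => bigO_weight (hnopole k hk)) hvn
    (bigO_weight_one (hnopole _ (by omega)) (by rw [hxp, neg_sq, hε]))
    (bigO_weight_one (hnopole _ (by omega)) (by rw [hxm, hε]))
    (fun k => (eq_or_ne k n).elim (fun h => h ▸ hregn) (hreg k)) h0
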